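/- Let F be a field with more than k elements, let n > k ≥ 2 with n + k odd, and let T be a linear map on M_{n×k}(F) such that det_{n,k}(T(X)) = det_{n,k}(X) for all X and such that the image of T equals M^0_{n,k}(F). Then L^+ ∘ L^- ∘ T = T and T ∘ L^+ ∘ L^- = T; consequently, setting S = L^- ∘ T ∘ L^+, one has T = L^+ ∘ S ∘ L^-. -/

import Mathlib

open Classical in
noncomputable def cullisDet {F : Type*} [Field F] {n k : ℕ}
    (X : Matrix (Fin n) (Fin k) F) : F :=
  ∑ f : Fin k → Fin n, if StrictMono f then
    (-1 : F) ^ (∑ j : Fin k, ((f j : ℕ) - (j : ℕ))) * (X.submatrix f id).det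
  else 0


/-- `L⁻`: subtract the last row from the others and delete it. -/
def Lminus {F : Type*} [Field F] {n k : ℕ}
    (X : Matrix (Fin n) (Fin k) F) : Matrix (Fin (n - 1)) (Fin k) F :=
  fun i j => X ⟨i, by have := i.isLt; omega⟩ j - X ⟨n - 1, by have := i.isLt; omega⟩ j


/-- `L⁺`: append a zero row at the bottom. -/
def Lplus {F : Type*} [Field F] {n k : ℕ}
    (Y : Matrix (Fin (n - 1)) (Fin k) F) : Matrix (Fin n) (Fin k) F :=
  fun i j => if h : (i : ℕ) < n - 1 then Y ⟨i, h⟩ j else 0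

/-!
Call a matrix `Z` with `det_{n,k}(X + Z) = det_{n,k}(X)` for all `X` a period. By multilinearity
the columns of a period are exactly the vectors that annihilate `det_{n,k}` when put into one of its
slots, and for `n + k` odd, `2 ≤ k ≤ n`, these are the constant vectors, so the periods are the
matrices with all rows equal. Every matrix is the sum of an element of `M^0` and a period, so if `T`
preserves `det_{n,k}` and maps onto `M^0`, it sends periods to periods; but `M^0` contains no period
other than `0`, so `T` kills them all. Now `X - L⁺ (L⁻ X)` is always a period, and it is `0` for
`X` in `M^0`.
-/

open Matrix

theorem multilinearMap_forall_map_add_eq_iff {R ι N : Type*} {M : ι → Type*} [Semiring R]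
    [∀ i, AddCommGroup (M i)] [∀ i, Module R (M i)] [AddCommMonoid N] [Module R N]
    [Finite ι] [DecidableEq ι] (f : MultilinearMap R M N) (u : ∀ i, M i) :
    (∀ v, f (v + u) = f v) ↔ ∀ j v, f (Function.update v j (u j)) = 0 := by
  constructor
  · intro h j v
    have hupdate : Function.update v j (u j) = Function.update (v - u) j 0 + u := by
      ext i
      rcases eq_or_ne i j with rfl | hij <;> simp [*]
    rw [hupdate, h, f.map_coord_zero j (Function.update_self ..)]
  · intro h v
    cases nonempty_fintype ι
    rw [f.map_add_univ, Finset.sum_eq_single_of_mem Finset.univ (Finset.mem_univ _),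
      Finset.piecewise_univ]
    intro s _ hs
    obtain ⟨j, hj⟩ : ∃ j, j ∉ s := by simpa [Finset.eq_univ_iff_forall] using hs
    rw [← h j (s.piecewise v u), ← Finset.piecewise_eq_of_notMem s v u hj,
      Function.update_eq_self]

theorem alternatingMap_forall_map_add_eq_iff {R M N : Type*} [CommRing R] [AddCommGroup M]
    [Module R M] [AddCommGroup N] [Module R N] {k : ℕ} (f : M [⋀^Fin (k + 1)]→ₗ[R] N)
    (u : Fin (k + 1) → M) :
    (∀ v, f (v + u) = f v) ↔ ∀ j w, f (vecCons (u j) w) = 0 := by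
  refine (multilinearMap_forall_map_add_eq_iff f.toMultilinearMap u).trans
    (forall_congr' fun j => ⟨fun h w => ?_, fun h v => ?_⟩)
  · rw [← f.neg_one_pow_smul_map_insertNth j, ← Fin.update_insertNth j 0]
    exact (congrArg _ (h _)).trans (smul_zero _)
  · rw [← Fin.insertNth_removeNth]
    exact (f.map_insertNth j _ _).trans (by rw [h, smul_zero])

theorem val_le_of_strictMono {k n : ℕ} {f : Fin k → Fin n} (hf : StrictMono f) (j : Fin k) :
    (j : ℕ) ≤ f j := by
  obtain ⟨j, hj⟩ := j
  induction j with
  | zero => exact Nat.zero_le _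
  | succ j ih => exact (ih (by omega)).trans_lt (hf (Fin.mk_lt_mk.2 j.lt_succ_self))

theorem strictMono_fin_succ_iff {n k : ℕ} {f : Fin (k + 1) → Fin (n + 1)} :
    StrictMono f ↔ (∃ g : Fin (k + 1) → Fin n, StrictMono g ∧ Fin.succ ∘ g = f) ∨
      ∃ g : Fin k → Fin n, StrictMono g ∧ vecCons 0 (Fin.succ ∘ g) = f := by
  constructor
  · intro hf
    have hpos : ∀ j : Fin k, f j.succ ≠ 0 := fun j => (hf (Fin.succ_pos j)).ne_bot
    by_cases h0 : f 0 = 0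
    · refine .inr ⟨fun j => (f j.succ).pred (hpos j),
        Fin.strictMono_pred_comp _ (hf.comp Fin.strictMono_succ), ?_⟩
      ext j
      cases j using Fin.cases <;> simp [h0]
    · exact .inl ⟨fun j => (f j).pred (Fin.cases h0 hpos j), Fin.strictMono_pred_comp _ hf,
        by ext; simp⟩
  · rintro (⟨g, hg, rfl⟩ | ⟨g, hg, rfl⟩)
    · exact Fin.strictMono_succ.comp hg
    · exact Fin.strictMono_cons.2 ⟨fun j => Fin.succ_pos _, Fin.strictMono_succ.comp hg⟩

open Classical in
theorem sum_strictMono_fin_succ {A : Type*} [AddCommMonoid A] {n k : ℕ}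
    (G : (Fin (k + 1) → Fin (n + 1)) → A) :
    ∑ f with StrictMono f, G f = ∑ g : Fin (k + 1) → Fin n with StrictMono g, G (Fin.succ ∘ g) +
      ∑ g : Fin k → Fin n with StrictMono g, G (vecCons 0 (Fin.succ ∘ g)) := by
  have hsucc (m : ℕ) : Function.Injective fun g : Fin m → Fin n => Fin.succ ∘ g :=
    (Fin.succ_injective n).comp_left
  have hcons : Function.Injective fun g : Fin k → Fin n => vecCons 0 (Fin.succ ∘ g) :=
    (Fin.cons_right_injective (α := fun _ => Fin (n + 1)) 0).comp (hsucc k)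
  rw [← Finset.sum_image (f := G) (hsucc _).injOn, ← Finset.sum_image (f := G) hcons.injOn,
    ← Finset.sum_union]
  · congr 1
    ext f
    simp only [Finset.mem_union, Finset.mem_image, Finset.mem_filter, Finset.mem_univ, true_and,
      strictMono_fin_succ_iff]
  · simp only [Finset.disjoint_left, Finset.mem_image]
    rintro _ ⟨g, -, rfl⟩ ⟨g', -, h⟩
    exact Fin.succ_ne_zero _ (congrFun h 0).symm

open Classical in
/-- The Cullis determinant over a commutative ring, as an alternating form in the `k` columns: its
arguments are the columns of the matrix, so that one column at a time can be varied and
`vecCons z w` prepends the column `z`. The parameters `n k` are the numbers of rows and columns. -/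
noncomputable def cullisForm (R : Type*) [CommRing R] (n k : ℕ) : (Fin n → R) [⋀^Fin k]→ₗ[R] R :=
  ∑ f : Fin k → Fin n with StrictMono f,
    (-1 : R) ^ (∑ j, ((f j : ℕ) - (j : ℕ))) •
      detRowAlternating.compLinearMap (LinearMap.funLeft R R f)

section
variable {R : Type*} [CommRing R] {n k : ℕ}

open Classical in
theorem cullisForm_apply (v : Fin k → Fin n → R) :
    cullisForm R n k v = ∑ f : Fin k → Fin n with StrictMono f,
      (-1) ^ (∑ j, ((f j : ℕ) - (j : ℕ))) * (of fun i j => v i (f j)).det :=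
  map_sum (AddMonoidHom.mk' (fun φ : (Fin n → R) [⋀^Fin k]→ₗ[R] R => φ v) fun _ _ => rfl) _ _

theorem sum_succ_val_sub_of_strictMono {f : Fin k → Fin n} (hf : StrictMono f) :
    ∑ j, ((f j).succ.val - j.val) = k + ∑ j, ((f j).val - j.val) := by
  simp only [Fin.val_succ, Nat.sub_add_comm (val_le_of_strictMono hf _), Finset.sum_add_distrib,
    Finset.sum_const, Finset.card_univ, Fintype.card_fin, smul_eq_mul, mul_one, add_comm]

theorem cullisForm_succ_succ (v : Fin (k + 1) → Fin (n + 1) → R) :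
    cullisForm R (n + 1) (k + 1) v = (-1) ^ (k + 1) * cullisForm R n (k + 1) (vecTail ∘ v) +
      ∑ j : Fin (k + 1), (-1) ^ (j : ℕ) * v j 0 * cullisForm R n k (vecTail ∘ j.removeNth v) := by
  classical
  simp only [cullisForm_apply, sum_strictMono_fin_succ, Finset.mul_sum]
  congr 1
  · refine Finset.sum_congr rfl fun f hf => ?_
    simp only [Function.comp_apply]
    rw [sum_succ_val_sub_of_strictMono (Finset.mem_filter.1 hf).2, pow_add, mul_assoc]
    rfl
  · rw [Finset.sum_comm]
    refine Finset.sum_congr rfl fun f _ => ?_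
    rw [det_succ_column_zero, Finset.mul_sum]
    refine Finset.sum_congr rfl fun j _ => ?_
    have hexp : ∑ j : Fin (k + 1), ((vecCons 0 (Fin.succ ∘ f) j : Fin (n + 1)).val - j.val) =
        ∑ j, ((f j).val - j.val) := by
      simp [Fin.sum_univ_succ]
    rw [hexp, mul_left_comm]
    rfl

theorem cullisForm_zero_right (v : Fin 0 → Fin n → R) : cullisForm R n 0 v = 1 := by
  simp [cullisForm_apply, Subsingleton.strictMono]

theorem cullisForm_zero_vecCons (w : Fin k → Fin n → R) :
    cullisForm R n (k + 1) (vecCons 0 w) = 0 :=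
  (cullisForm R n (k + 1)).map_coord_zero 0 rfl

theorem cullisForm_vecCons_zero_vecCons (z : Fin n → R) (w : Fin k → Fin n → R) :
    cullisForm R n (k + 2) (vecCons z (vecCons 0 w)) = 0 :=
  (cullisForm R n (k + 2)).map_coord_zero 1 rfl

theorem cullisForm_zero_succ (v : Fin (k + 1) → Fin 0 → R) : cullisForm R 0 (k + 1) v = 0 :=
  (cullisForm R 0 (k + 1)).map_coord_zero 0 (Subsingleton.elim _ _)

theorem removeNth_succ_vecCons {α : Type*} (j : Fin (k + 1)) (x : α) (w : Fin (k + 1) → α) :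
    j.succ.removeNth (vecCons x w) = vecCons x (j.removeNth w) := Fin.cons_comp_succ_succAbove ..

theorem cullisForm_vecCons (z : Fin (n + 1) → R) (w : Fin k → Fin (n + 1) → R) :
    cullisForm R (n + 1) (k + 1) (vecCons z w) =
      (-1) ^ (k + 1) * cullisForm R n (k + 1) (vecCons (vecTail z) (vecTail ∘ w)) +
        z 0 * cullisForm R n k (vecTail ∘ w) -
        ∑ j : Fin k, (-1) ^ (j : ℕ) * w j 0 *
          cullisForm R n k (vecTail ∘ j.succ.removeNth (vecCons z w)) := by
  have htail : vecTail ∘ vecCons z w = vecCons (vecTail z) (vecTail ∘ w) := Fin.comp_cons ..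
  have hzero : Fin.removeNth 0 (vecCons z w) = w := rfl
  simp only [cullisForm_succ_succ, Fin.sum_univ_succ, htail, hzero, Fin.val_zero, pow_zero, one_mul,
    cons_val_zero, cons_val_succ, Fin.val_succ, pow_succ, mul_neg, mul_one, neg_mul,
    Finset.sum_neg_distrib]
  ring

theorem cullisForm_vecCons_vecCons_zero (z : Fin (n + 1) → R) (w : Fin k → Fin n → R) :
    cullisForm R (n + 1) (k + 1) (vecCons z (vecCons 0 ∘ w)) =
      (-1) ^ (k + 1) * cullisForm R n (k + 1) (vecCons (vecTail z) w) +
        z 0 * cullisForm R n k w := by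
  have htail : vecTail ∘ vecCons (0 : R) ∘ w = w := rfl
  rw [cullisForm_vecCons, htail]
  simp

theorem cullisForm_vecCons_vecCons_vecCons_zero (z y : Fin (n + 1) → R) (w : Fin k → Fin n → R) :
    cullisForm R (n + 1) (k + 2) (vecCons z (vecCons y (vecCons 0 ∘ w))) =
      (-1) ^ k * cullisForm R n (k + 2) (vecCons (vecTail z) (vecCons (vecTail y) w)) +
        z 0 * cullisForm R n (k + 1) (vecCons (vecTail y) w) -
        y 0 * cullisForm R n (k + 1) (vecCons (vecTail z) w) := by
  have htail : vecTail ∘ vecCons y (vecCons 0 ∘ w) = vecCons (vecTail y) w := Fin.comp_cons ..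
  have hremove : vecTail ∘ Fin.removeNth 1 (vecCons z (vecCons y (vecCons 0 ∘ w))) =
      vecCons (vecTail z) w := by
    ext j
    cases j using Fin.cases <;> rfl
  rw [cullisForm_vecCons, htail, Fin.sum_univ_succ]
  simp [hremove, pow_add]

theorem cullisForm_comp_vecCons_zero (w : Fin k → Fin n → R) :
    cullisForm R (n + 1) k (vecCons 0 ∘ w) = (-1) ^ k * cullisForm R n k w := by
  cases k with
  | zero => simp [cullisForm_zero_right]
  | succ k =>
    have htail : vecTail ∘ vecCons (0 : R) ∘ w = w := rfl
    simp [cullisForm_succ_succ, htail]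

theorem exists_cullisForm_eq_one (hkn : k ≤ n) : ∃ w, cullisForm R n k w = 1 := by
  induction k generalizing n with
  | zero => exact ⟨0, cullisForm_zero_right _⟩
  | succ k ih =>
    obtain ⟨n, rfl⟩ := Nat.exists_eq_add_of_lt hkn
    obtain ⟨w, hw⟩ := ih (Nat.le_add_right k n)
    refine ⟨vecCons (vecCons 1 0) (vecCons 0 ∘ w), ?_⟩
    rw [cullisForm_vecCons_vecCons_zero, tail_cons, cullisForm_zero_vecCons, cons_val_zero, hw,
      mul_zero, zero_add, one_mul]

theorem cullisForm_vecCons_one (w : Fin k → Fin n → R) :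
    cullisForm R n (k + 1) (vecCons 1 w) =
      if Even (n + k) then 0 else (-1) ^ k * cullisForm R n k w := by
  induction n generalizing k with
  | zero =>
    cases k <;> simp [cullisForm_zero_succ]
  | succ n ih =>
    have htail : vecTail (1 : Fin (n + 1) → R) = 1 := rfl
    rw [cullisForm_vecCons, htail, ih]
    cases k with
    | zero =>
      by_cases h : Even n <;> simp [cullisForm_zero_right, h, Nat.even_add_one]
    | succ k =>
      have hremove (j : Fin (k + 1)) : vecTail ∘ j.succ.removeNth (vecCons 1 w) =
          vecCons 1 (vecTail ∘ j.removeNth w) := by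
        rw [removeNth_succ_vecCons]
        exact Fin.comp_cons ..
      have hsq : ((-1) ^ k * (-1) ^ k : R) = 1 := pow_mul_pow_eq_one k (by norm_num)
      have heven : Even (n + 1 + (k + 1)) ↔ Even (n + k) := by grind
      have hodd : Even (n + (k + 1)) ↔ ¬ Even (n + k) := by grind
      simp only [hremove, ih, cullisForm_succ_succ w, heven, hodd, ite_not, Pi.one_apply, one_mul]
      split_ifs
      · simp only [mul_zero, Finset.sum_const_zero, sub_zero]
        linear_combination (-cullisForm R n (k + 1) (vecTail ∘ w)) * hsq
      · simp only [mul_left_comm _ ((-1 : R) ^ k) (cullisForm R n k _), ← Finset.mul_sum]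
        linear_combination (-cullisForm R n (k + 1) (vecTail ∘ w)) * hsq

theorem exists_cullisForm_vecCons_eq_zero_sub_one (hkn : k ≤ n) :
    ∃ w, cullisForm R (n + 2) (k + 1) w = 0 ∧
      ∀ z, cullisForm R (n + 2) (k + 2) (vecCons z w) = z 0 - z 1 := by
  obtain ⟨w, hw⟩ := exists_cullisForm_eq_one (R := R) hkn
  -- The columns after `e₀ + e₁` vanish in rows `0` and `1`, which leaves the `2 × 2` minor of
  -- `(z, e₀ + e₁)` in those rows.
  refine ⟨vecCons (vecCons 1 (vecCons 1 0)) (vecCons 0 ∘ vecCons 0 ∘ w), ?_, fun z => ?_⟩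
  · simp [cullisForm_vecCons_vecCons_zero, cullisForm_comp_vecCons_zero, cullisForm_zero_vecCons,
      hw, pow_succ]
  · have hz : vecTail z 0 = z 1 := rfl
    simp [cullisForm_vecCons_vecCons_zero, cullisForm_vecCons_vecCons_vecCons_zero,
      cullisForm_zero_vecCons, cullisForm_vecCons_zero_vecCons, hw, hz, pow_succ]

theorem exists_cullisForm_vecCons_eq_castSucc_sub_succ (hkn : k < n) (i : Fin n) :
    ∃ w, cullisForm R (n + 1) (k + 1) w = 0 ∧
      ∀ z, cullisForm R (n + 1) (k + 2) (vecCons z w) = z i.castSucc - z i.succ := by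
  induction n generalizing k with
  | zero => exact i.elim0
  | succ n ih =>
    cases i using Fin.cases with
    | zero => exact exists_cullisForm_vecCons_eq_zero_sub_one (Nat.le_of_lt_succ hkn)
    | succ i =>
      have hz (z : Fin (n + 2) → R) : vecTail z i.castSucc - vecTail z i.succ =
          z i.succ.castSucc - z i.succ.succ := rfl
      cases k with
      | zero =>
        obtain ⟨w, hw, hsub⟩ := ih i.pos i
        exact ⟨vecCons 0 ∘ w, by simp [cullisForm_comp_vecCons_zero, hw],
          fun z => by simp [cullisForm_vecCons_vecCons_zero, hw, hsub, hz]⟩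
      | succ k =>
        obtain ⟨w, hw, hsub⟩ := ih (Nat.lt_of_succ_lt_succ hkn) i
        -- With `-e₀` as second column, expanding along it deletes row `0`.
        exact ⟨vecCons (vecCons (-1) 0) (vecCons 0 ∘ w),
          by simp [cullisForm_vecCons_vecCons_zero, cullisForm_zero_vecCons, hw],
          fun z => by simp [cullisForm_vecCons_vecCons_vecCons_zero,
            cullisForm_vecCons_zero_vecCons, hsub, hz]⟩

theorem forall_cullisForm_vecCons_eq_zero_iff (hkn : k + 2 ≤ n) (hodd : Odd (n + k))
    (z : Fin n → R) :
    (∀ w, cullisForm R n (k + 2) (vecCons z w) = 0) ↔ ∃ c : R, z = c • 1 := by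
  obtain ⟨n, rfl⟩ := Nat.exists_eq_add_of_lt (Nat.zero_lt_of_lt hkn)
  constructor
  · intro h
    refine ⟨z 0, funext fun i => ?_⟩
    rw [Pi.smul_apply, Pi.one_apply, smul_eq_mul, mul_one]
    induction i using Fin.induction with
    | zero => rfl
    | succ i ih =>
      obtain ⟨w, -, hw⟩ := exists_cullisForm_vecCons_eq_castSucc_sub_succ (R := R) (k := k)
        (by omega) i
      rw [← ih, eq_comm, ← sub_eq_zero, ← hw, h]
  · rintro ⟨c, rfl⟩ w
    rw [AlternatingMap.map_vecCons_smul, cullisForm_vecCons_one, if_pos (by grind), smul_zero]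

end

section
variable {F : Type*} [Field F] {n k : ℕ}

theorem cullisDet_eq_cullisForm (X : Matrix (Fin n) (Fin k) F) :
    cullisDet X = cullisForm F n k X.col := by
  rw [cullisDet, cullisForm_apply, Finset.sum_filter]
  refine Finset.sum_congr rfl fun f _ => ?_
  rw [← det_transpose]
  rfl

theorem forall_cullisDet_add_eq_iff (hk : 2 ≤ k) (hkn : k ≤ n) (hodd : Odd (n + k))
    (Z : Matrix (Fin n) (Fin k) F) :
    (∀ X, cullisDet (X + Z) = cullisDet X) ↔ ∃ c, Z = replicateRow (Fin n) c := by
  obtain ⟨k, rfl⟩ := Nat.exists_eq_add_of_le' hk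
  calc (∀ X, cullisDet (X + Z) = cullisDet X)
      ↔ ∀ v, cullisForm F n (k + 2) (v + Z.col) = cullisForm F n (k + 2) v := by
        simp only [cullisDet_eq_cullisForm]
        exact ⟨fun h v => h (of v)ᵀ, fun h X => h X.col⟩
    _ ↔ ∀ j, ∃ a : F, Z.col j = a • 1 := by
        rw [alternatingMap_forall_map_add_eq_iff]
        exact forall_congr' fun j => forall_cullisForm_vecCons_eq_zero_iff hkn (by grind) _
    _ ↔ ∃ c, Z = replicateRow (Fin n) c := by
        rw [Classical.skolem]
        simp [funext_iff, ← Matrix.ext_iff, forall_comm (α := Fin n)]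

theorem cullisDet_add_replicateRow (hk : 2 ≤ k) (hkn : k ≤ n) (hodd : Odd (n + k))
    (X : Matrix (Fin n) (Fin k) F) (c : Fin k → F) :
    cullisDet (X + replicateRow (Fin n) c) = cullisDet X :=
  (forall_cullisDet_add_eq_iff hk hkn hodd _).2 ⟨c, rfl⟩ X

theorem Lplus_Lminus_apply_last (hn : n - 1 < n) (X : Matrix (Fin n) (Fin k) F) (q : Fin k) :
    Lplus (Lminus X) ⟨n - 1, hn⟩ q = 0 :=
  dif_neg (lt_irrefl _)

theorem Lplus_Lminus_add_replicateRow (hn : n - 1 < n) (X : Matrix (Fin n) (Fin k) F) :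
    Lplus (Lminus X) + replicateRow (Fin n) (X ⟨n - 1, hn⟩) = X := by
  ext i j
  by_cases hi : (i : ℕ) < n - 1
  · simp [Lplus, Lminus, hi]
  · obtain rfl : i = ⟨n - 1, hn⟩ := Fin.ext (by dsimp only; omega)
    simp [Lplus]

theorem Lplus_Lminus_of_last_eq_zero (hn : n - 1 < n) {X : Matrix (Fin n) (Fin k) F}
    (hX : X ⟨n - 1, hn⟩ = 0) : Lplus (Lminus X) = X := by
  simpa [hX] using Lplus_Lminus_add_replicateRow hn X

end

theorem stmt11_general {F : Type*} [Field F] {n k : ℕ} (hk : 2 ≤ k) (hkn : k < n)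
    (hodd : Odd (n + k)) (T : Matrix (Fin n) (Fin k) F →+ Matrix (Fin n) (Fin k) F)
    (hT : ∀ X, cullisDet (T X) = cullisDet X)
    (hImg : Set.range (⇑T) =
      {X : Matrix (Fin n) (Fin k) F | ∀ q : Fin k, X ⟨n - 1, Nat.sub_one_lt_of_lt hkn⟩ q = 0}) :
    (∀ X, Lplus (Lminus (T X)) = T X) ∧
      (∀ X, T (Lplus (Lminus X)) = T X) ∧
      (∀ X, Lplus (Lminus (T (Lplus (Lminus X)))) = T X) := by
  have hn : n - 1 < n := Nat.sub_one_lt_of_lt hkn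
  have hmem (Y) : Y ∈ Set.range T ↔ ∀ q, Y ⟨n - 1, hn⟩ q = 0 := by rw [hImg]; rfl
  have hlast (X) : T X ⟨n - 1, hn⟩ = 0 := funext ((hmem _).1 ⟨X, rfl⟩)
  have hinv := cullisDet_add_replicateRow (F := F) hk hkn.le hodd
  have hker (c) : T (replicateRow (Fin n) c) = 0 := by
    obtain ⟨d, hd⟩ : ∃ d, T (replicateRow (Fin n) c) = replicateRow (Fin n) d := by
      refine (forall_cullisDet_add_eq_iff hk hkn.le hodd _).1 fun Y => ?_
      obtain ⟨W, hW⟩ := (hmem _).2 (Lplus_Lminus_apply_last hn Y)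
      rw [← Lplus_Lminus_add_replicateRow hn Y, ← hW, add_right_comm, hinv, hinv, ← map_add, hT,
        hT, hinv]
    have hd0 : d = 0 := (congrFun hd ⟨n - 1, hn⟩).symm.trans (hlast _)
    rw [hd, hd0]
    rfl
  have hLT (X) : Lplus (Lminus (T X)) = T X := Lplus_Lminus_of_last_eq_zero hn (hlast X)
  have hTL (X) : T (Lplus (Lminus X)) = T X := by
    conv_rhs => rw [← Lplus_Lminus_add_replicateRow hn X, map_add, hker, add_zero]
  exact ⟨hLT, hTL, fun X => by rw [hLT, hTL]⟩

/-- Lemma 4.10(b),(c),(d): if `T` preserves `det_{n,k}` and its image is the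
space of matrices with zero last row, then `L⁺ ∘ L⁻ ∘ T = T`,
`T ∘ L⁺ ∘ L⁻ = T`, and hence with `S = L⁻ ∘ T ∘ L⁺` one has
`T = L⁺ ∘ S ∘ L⁻`. -/
theorem stmt11 {F : Type*} [Field F] {n k : ℕ} (hk : 2 ≤ k) (hkn : k < n)
    (hodd : Odd (n + k)) (hF : (k : Cardinal) < Cardinal.mk F)
    (T : Matrix (Fin n) (Fin k) F →ₗ[F] Matrix (Fin n) (Fin k) F)
    (hT : ∀ X, cullisDet (T X) = cullisDet X)
    (hImg : Set.range (⇑T) =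
      {X : Matrix (Fin n) (Fin k) F | ∀ q : Fin k, X ⟨n - 1, by omega⟩ q = 0}) :
    (∀ X, Lplus (Lminus (T X)) = T X) ∧
      (∀ X, T (Lplus (Lminus X)) = T X) ∧
      (∀ X, Lplus (Lminus (T (Lplus (Lminus X)))) = T X) :=
  stmt11_general hk hkn hodd T.toAddMonoidHom hT hImg
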